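/- Let δ > (n−1)/2. Then there exists a constant C > 0 such that for every suitable function f on R^n and every x ∈ R^n, the maximal Bochner–Riesz operator satisfies the pointwise bound T^δ_* f(x) ≤ C · M f(x), where M is the Hardy–Littlewood maximal operator. -/

import Mathlib

/-!
The kernel `φ` of `T^δ` has a radially decreasing integrable majorant when `δ > (n - 1) / 2`, and
convolution with the dilates of such a function is dominated by the maximal function.

*Decay of the kernel.* By rotation invariance `φ(x)` is the Fourier integral of `(1 - |ξ|²)₊^δ` at
`|x| e₀`. Integrating out the other `n - 1` coordinates leaves a constant times
`∫_{-1}^{1} exp(2πi|x|s) (1 - s²)^ν ds` with `ν = δ + (n - 1) / 2` (`brKernel_eq`). The integrand is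
holomorphic in `|Re s| < 1`, `Im s > 0`, where `1 - s²` has positive real part, so Cauchy's theorem
on a rectangle moves the integral to the vertical segments above `±1` and a top side; there the
exponential decays, and a Gamma integral bounds the result by `C |x|^(-ν-1)`
(`oscillatory_decay`). Since `ν + 1 = δ + (n + 1) / 2 > n`, the decay is of order better than `n`
(`brKernel_bound`).

*Maximal function.* Splitting space dyadically around `x`, the part of the convolution at distance
about `2^k / R` is at most a constant times `2^(k (n - ν - 1)) M f(x)`, and the geometric series
converges (`convolution_le_hlMax`).
-/

open MeasureTheory Real Complex Set
open scoped ENNReal NNReal FourierTransform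

noncomputable section

/-- Euclidean space `ℝⁿ`. -/
abbrev Euc (n : ℕ) := EuclideanSpace ℝ (Fin n)

/-- The axis-parallel closed cube centered at `x₀` with side length `r`. -/
def cube {n : ℕ} (x₀ : Euc n) (r : ℝ) : Set (Euc n) :=
  {y | ∀ i, |y i - x₀ i| ≤ r / 2}

/-- The weighted measure `w(E) = ∫_E w(x) dx`. -/
def wMeasure {n : ℕ} (w : Euc n → ℝ) : Measure (Euc n) :=
  (volume : Measure (Euc n)).withDensity fun x => ENNReal.ofReal (w x)

/-- The Muckenhoupt class `A₁`: `w` is nonnegative, locally integrable, and the average of `w`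
over any cube is dominated by a constant times the essential infimum of `w` over that cube. -/
def IsA1 {n : ℕ} (w : Euc n → ℝ) : Prop :=
  (∀ x, 0 ≤ w x) ∧ LocallyIntegrable w volume ∧
    ∃ C : ℝ, 0 < C ∧ ∀ (x₀ : Euc n) (r : ℝ), 0 < r →
      (∫ x in cube x₀ r, w x) / r ^ n ≤ C * essInf w (volume.restrict (cube x₀ r))

/-- The Muckenhoupt class `A_q`, `1 < q < ∞`. -/
def IsAq {n : ℕ} (w : Euc n → ℝ) (q : ℝ) : Prop :=
  (∀ x, 0 ≤ w x) ∧ LocallyIntegrable w volume ∧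
    ∃ C : ℝ, 0 < C ∧ ∀ (x₀ : Euc n) (r : ℝ), 0 < r →
      ((∫ x in cube x₀ r, w x) / r ^ n) *
        ((∫ x in cube x₀ r, w x ^ (-1 / (q - 1))) / r ^ n) ^ (q - 1) ≤ C

/-- The critical index `q_w = inf {q > 1 : w ∈ A_q}` of a weight `w`. -/
def criticalIndex {n : ℕ} (w : Euc n → ℝ) : ℝ :=
  sInf {q : ℝ | 1 < q ∧ IsAq w q}

/-- The `L¹`-dilation `g_t(x) = t⁻ⁿ g(x / t)`. -/
def dil {n : ℕ} (g : Euc n → ℂ) (t : ℝ) (x : Euc n) : ℂ :=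
  ((t ^ n)⁻¹ : ℝ) • g ((t⁻¹ : ℝ) • x)

/-- The Bochner-Riesz kernel `φ` of order `δ`, i.e. the inverse Fourier transform of
`ξ ↦ (1 - |ξ|²)₊^δ`. -/
def brKernel (n : ℕ) (δ : ℝ) : Euc n → ℂ :=
  𝓕⁻ fun ξ : Euc n => (Complex.ofReal (((1 - ‖ξ‖ ^ 2) ⊔ 0) ^ δ))

/-- The Bochner-Riesz operator `T^δ_R f = φ_{1/R} * f` of order `δ`. -/
def brOp (n : ℕ) (δ R : ℝ) (f : Euc n → ℂ) (x : Euc n) : ℂ :=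
  ∫ y, dil (brKernel n δ) R⁻¹ (x - y) * f y

/-- The maximal Bochner-Riesz operator `T^δ_* f(x) = sup_{R > 0} |T^δ_R f(x)|`. -/
def maxBR (n : ℕ) (δ : ℝ) (f : Euc n → ℂ) (x : Euc n) : ℝ≥0∞ :=
  ⨆ (R : ℝ) (_ : 0 < R), (‖brOp n δ R f x‖₊ : ℝ≥0∞)

/-- Partial derivative in the `i`-th coordinate direction. -/
def pderiv' {n : ℕ} (i : Fin n) (f : Euc n → ℂ) : Euc n → ℂ :=
  fun x => fderiv ℝ f x (EuclideanSpace.single i 1)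

/-- The multi-index partial derivative `D^α f`. -/
def mderiv {n : ℕ} (α : Fin n → ℕ) (f : Euc n → ℂ) : Euc n → ℂ :=
  (((List.finRange n).map fun i => (pderiv' i)^[α i]).foldr (· ∘ ·) id) f

/-- The test function class
`𝒜_N = {φ ∈ 𝒮 : sup_x sup_{|α| ≤ N+1} (1+|x|)^{N+n+1} |D^α φ(x)| ≤ 1}`. -/
def inTestClass {n : ℕ} (N : ℕ) (φ : SchwartzMap (Euc n) ℂ) : Prop :=
  ∀ (x : Euc n) (α : Fin n → ℕ), (∑ i, α i) ≤ N + 1 →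
    (1 + ‖x‖) ^ (N + n + 1) * ‖mderiv α (⇑φ) x‖ ≤ 1

/-- The radial grand maximal function
`G⁺ f(x) = sup_{φ ∈ 𝒜_N} sup_{t > 0} |(φ_t * f)(x)|`. -/
def grandMax {n : ℕ} (N : ℕ) (f : Euc n → ℂ) (x : Euc n) : ℝ≥0∞ :=
  ⨆ (φ : SchwartzMap (Euc n) ℂ) (_ : inTestClass N φ) (t : ℝ) (_ : 0 < t),
    (‖∫ y, dil (⇑φ) t (x - y) * f y‖₊ : ℝ≥0∞)

/-- The weak `L^p` quasinorm `sup_{λ > 0} λ · μ({x : g(x) > λ})^{1/p}` of an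
`ℝ≥0∞`-valued function with respect to the measure `μ`. -/
def weakNorm {n : ℕ} (μ : Measure (Euc n)) (p : ℝ) (g : Euc n → ℝ≥0∞) : ℝ≥0∞ :=
  ⨆ (lam : ℝ≥0) (_ : 0 < lam), (lam : ℝ≥0∞) * μ {x | (lam : ℝ≥0∞) < g x} ^ (1 / p)

/-- The weak Hardy space quasinorm `‖f‖_{WH^p_w} = ‖G⁺ f‖_{WL^p_w}`, with grand maximal
function taken over the test class `𝒜_N`. -/
def whNorm {n : ℕ} (N : ℕ) (μ : Measure (Euc n)) (p : ℝ) (f : Euc n → ℂ) : ℝ≥0∞ :=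
  weakNorm μ p (grandMax N f)

/-- The Hardy-Littlewood maximal function (over cubes containing `x`). -/
def hlMax {n : ℕ} (f : Euc n → ℂ) (x : Euc n) : ℝ≥0∞ :=
  ⨆ (x₀ : Euc n) (r : ℝ) (_ : 0 < r) (_ : x ∈ cube x₀ r),
    (volume (cube x₀ r))⁻¹ * ∫⁻ y in cube x₀ r, (‖f y‖₊ : ℝ≥0∞)

/-! ### Decay of a one-dimensional Fourier integral -/

/-- The Fourier integral of `(1 - s²)₊^ν` decays like `r^(-(ν + 1))`. The segment `[-1, 1]` is
replaced by the other three sides of the rectangle `[-1, 1] × [0, 1]`: on the vertical sides the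
integrand is at most `(3 y)^ν exp (-r y)`, and on the top side it is `O(exp (-r))`. -/
theorem oscillatory_decay {ν : ℝ} (hν : 0 < ν) :
    ∃ A : ℝ, 0 < A ∧ ∀ r : ℝ, 0 < r →
      ‖∫ s in (-1 : ℝ)..1, Complex.exp (r * s * I) * (((1 - s ^ 2) ^ ν : ℝ) : ℂ)‖
        ≤ A * r ^ (-(ν + 1)) := by
  have hν1 : 0 < ν + 1 := by linarith
  refine ⟨2 * 5 ^ ν * (ν + 1) ^ (ν + 1) + 2 * (3 ^ ν * Real.Gamma (ν + 1)), ?_, ?_⟩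
  · have := Real.Gamma_pos_of_pos hν1
    positivity
  intro r hr
  set F : ℂ → ℂ := fun z => Complex.exp (r * z * I) * (1 - z ^ 2) ^ (ν : ℂ) with hF
  -- On the half strip `|Re z| ≤ 1`, `0 ≤ Im z`, the base `1 - z²` has nonnegative real part,
  -- so the principal branch of the power is the right one.
  have hre : ∀ z : ℂ, (1 - z ^ 2).re = 1 - z.re ^ 2 + z.im ^ 2 := by
    intro z
    simp [pow_two, Complex.mul_re]
    ring
  have hcont : ContinuousOn F (uIcc (-1 : ℝ) 1 ×ℂ uIcc (0 : ℝ) 1) := by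
    intro z hz
    rw [mem_reProdIm, uIcc_of_le (by norm_num), uIcc_of_le (by norm_num)] at hz
    obtain ⟨⟨h1, h2⟩, -⟩ := hz
    apply ContinuousAt.continuousWithinAt
    refine ContinuousAt.mul (by fun_prop) ?_
    have h := Complex.continuousAt_cpow_const_of_re_pos (z := 1 - z ^ 2) (w := (ν : ℂ))
      (Or.inl (by rw [hre]; nlinarith [sq_nonneg z.im])) (by simpa using hν)
    exact ContinuousAt.comp (f := fun z : ℂ => 1 - z ^ 2) h (by fun_prop)
  have hdiff : DifferentiableOn ℂ F (Ioo (min (-1 : ℝ) 1) (max (-1 : ℝ) 1) ×ℂ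
      Ioo (min (0 : ℝ) 1) (max (0 : ℝ) 1)) := by
    intro z hz
    rw [mem_reProdIm, min_eq_left (by norm_num), max_eq_right (by norm_num),
      min_eq_left (by norm_num), max_eq_right (by norm_num)] at hz
    obtain ⟨⟨h1, h2⟩, ⟨h3, -⟩⟩ := hz
    apply DifferentiableAt.differentiableWithinAt
    refine DifferentiableAt.mul (by fun_prop) ?_
    refine DifferentiableAt.cpow_const (by fun_prop) (Or.inl ?_)
    rw [hre]; nlinarith [sq_nonneg z.im]
  have hrect := Complex.integral_boundary_rect_eq_zero_of_continuousOn_of_differentiableOn F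
    (-1) (1 + I) (by simpa using hcont) (by simpa using hdiff)
  simp only [neg_re, one_re, add_re, I_re, add_zero, neg_im, one_im, neg_zero, add_im, I_im,
    zero_add, ofReal_zero, zero_mul, ofReal_one, one_mul, ofReal_neg, smul_eq_mul] at hrect
  have hbot : (∫ s in (-1 : ℝ)..1, Complex.exp (r * s * I) * (((1 - s ^ 2) ^ ν : ℝ) : ℂ))
      = ∫ s in (-1 : ℝ)..1, F s := by
    refine intervalIntegral.integral_congr fun s hs => ?_
    rw [uIcc_of_le (by norm_num)] at hs
    simp only [hF]
    rw [Complex.ofReal_cpow (by nlinarith [hs.1, hs.2])]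
    push_cast
    rfl
  have hnorm : ∀ z : ℂ, ‖F z‖ = Real.exp (-(r * z.im)) * ‖1 - z ^ 2‖ ^ ν := by
    intro z
    simp only [hF, norm_mul, Complex.norm_exp]
    congr 1
    · simp
    · exact Complex.norm_cpow_real _ _
  have htop : ‖∫ x in (-1 : ℝ)..1, F (x + I)‖ ≤ 2 * 5 ^ ν * (ν + 1) ^ (ν + 1) * r ^ (-(ν + 1)) := by
    have h1 : ‖∫ x in (-1 : ℝ)..1, F (x + I)‖ ≤ (Real.exp (-r) * 5 ^ ν) * |1 - (-1 : ℝ)| := by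
      refine intervalIntegral.norm_integral_le_of_norm_le_const fun x hx => ?_
      rw [uIoc_of_le (by norm_num)] at hx
      rw [hnorm]
      simp only [add_im, ofReal_im, I_im, zero_add, mul_one]
      gcongr
      have hx' : ‖(x : ℂ) + I‖ ≤ 2 := by
        refine (norm_add_le _ _).trans ?_
        have : |x| ≤ 1 := abs_le.2 ⟨hx.1.le, hx.2⟩
        simp only [Complex.norm_real, Real.norm_eq_abs, Complex.norm_I]
        linarith
      calc ‖1 - ((x : ℂ) + I) ^ 2‖ ≤ ‖(1 : ℂ)‖ + ‖((x : ℂ) + I) ^ 2‖ := norm_sub_le _ _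
        _ ≤ 1 + 2 ^ 2 := by
          rw [norm_one, norm_pow]
          gcongr
        _ = 5 := by norm_num
    -- `(r / a) ^ a ≤ exp r` with `a = ν + 1`, from `x ≤ exp x` at `x = r / a`.
    have h2 : Real.exp (-r) ≤ (ν + 1) ^ (ν + 1) * r ^ (-(ν + 1)) := by
      have h3 : (r / (ν + 1)) ^ (ν + 1) ≤ Real.exp r := by
        calc (r / (ν + 1)) ^ (ν + 1) ≤ (Real.exp (r / (ν + 1))) ^ (ν + 1) := by
              gcongr
              linarith [Real.add_one_le_exp (r / (ν + 1))]
          _ = Real.exp r := by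
              rw [← Real.exp_mul]
              congr 1
              field_simp
      rw [Real.div_rpow hr.le hν1.le, div_le_iff₀ (by positivity)] at h3
      rw [Real.exp_neg, Real.rpow_neg hr.le, ← div_eq_mul_inv, le_div_iff₀ (by positivity),
        inv_mul_le_iff₀ (Real.exp_pos r)]
      exact h3
    have h4 : |1 - (-1 : ℝ)| = 2 := by norm_num
    rw [h4] at h1
    calc _ ≤ _ := h1
      _ ≤ ((ν + 1) ^ (ν + 1) * r ^ (-(ν + 1)) * 5 ^ ν) * 2 := by gcongr
      _ = _ := by ring
  have hside : ∀ a : ℂ, a ^ 2 = 1 → a.im = 0 → ‖∫ y in (0 : ℝ)..1, F (a + y * I)‖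
      ≤ 3 ^ ν * Real.Gamma (ν + 1) * r ^ (-(ν + 1)) := by
    intro a ha hai
    have han : ‖a‖ = 1 := by
      have : ‖a‖ ^ 2 = 1 := by rw [← norm_pow, ha, norm_one]
      nlinarith [norm_nonneg a]
    have hG := Real.integral_rpow_mul_exp_neg_mul_Ioi hν1 hr
    simp only [add_sub_cancel_right] at hG
    have hGint : IntegrableOn (fun t : ℝ => t ^ ν * Real.exp (-(r * t))) (Ioi 0) := by
      by_contra h
      have h0 := integral_undef h
      rw [h0] at hG
      have := Real.Gamma_pos_of_pos hν1
      have : 0 < (1 / r) ^ (ν + 1) * Real.Gamma (ν + 1) := by positivity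
      linarith
    have hle : ∀ y ∈ Ioc (0 : ℝ) 1, ‖F (a + y * I)‖ ≤ 3 ^ ν * (y ^ ν * Real.exp (-(r * y))) := by
      intro y hy
      have hy0 := hy.1.le
      rw [hnorm]
      simp only [add_im, hai, mul_im, ofReal_re, I_im, mul_one, ofReal_im, I_re, mul_zero,
        add_zero, zero_add]
      have h5 : ‖1 - (a + y * I) ^ 2‖ ≤ 3 * y := by
        have : 1 - (a + y * I) ^ 2 = y * (y - 2 * a * I) := by
          linear_combination -ha - (y : ℂ) ^ 2 * I_sq
        rw [this, norm_mul, Complex.norm_real, Real.norm_eq_abs, abs_of_nonneg hy0, mul_comm]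
        gcongr
        refine (norm_sub_le _ _).trans ?_
        simp only [norm_mul, han, Complex.norm_real, Real.norm_eq_abs, abs_of_nonneg hy0,
          Complex.norm_I, Complex.norm_two]
        linarith [hy.2]
      calc _ ≤ Real.exp (-(r * y)) * (3 * y) ^ ν := by gcongr
        _ = _ := by
          rw [Real.mul_rpow (by norm_num) hy0]
          ring
    rw [intervalIntegral.integral_of_le zero_le_one]
    calc ‖∫ y in Ioc (0 : ℝ) 1, F (a + y * I)‖
        ≤ ∫ y in Ioc (0 : ℝ) 1, 3 ^ ν * (y ^ ν * Real.exp (-(r * y))) := by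
          refine norm_integral_le_of_norm_le ?_ ?_
          · exact (hGint.mono_set Ioc_subset_Ioi_self).const_mul _
          · exact (ae_restrict_mem measurableSet_Ioc).mono hle
      _ ≤ ∫ y in Ioi (0 : ℝ), 3 ^ ν * (y ^ ν * Real.exp (-(r * y))) := by
          refine setIntegral_mono_set (hGint.const_mul _) ?_
            (Ioc_subset_Ioi_self.eventuallyLE)
          refine (ae_restrict_mem measurableSet_Ioi).mono fun y hy => ?_
          have : (0 : ℝ) < y := hy
          simp only [Pi.zero_apply]
          positivity
      _ = 3 ^ ν * Real.Gamma (ν + 1) * r ^ (-(ν + 1)) := by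
          rw [integral_const_mul, hG, one_div, Real.inv_rpow hr.le, Real.rpow_neg hr.le]
          ring
  have hR := hside 1 (by norm_num) (by simp)
  have hL := hside (-1) (by norm_num) (by simp)
  rw [hbot]
  have heq : (∫ s in (-1 : ℝ)..1, F s) = (∫ x in (-1 : ℝ)..1, F (x + I))
      - I * (∫ y in (0 : ℝ)..1, F (1 + y * I)) + I * (∫ y in (0 : ℝ)..1, F (-1 + y * I)) := by
    linear_combination hrect
  rw [heq]
  refine (norm_add_le _ _).trans ?_
  refine (add_le_add (norm_sub_le _ _) le_rfl).trans ?_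
  rw [norm_mul, norm_mul, Complex.norm_I, one_mul, one_mul]
  linarith

/-! ### The Bochner-Riesz kernel -/

/-- Integrating the multiplier `(1 - |ξ|²)₊^δ` over the hyperplane `ξ₀ = s` gives a multiple of
`(1 - s²)₊^(δ + m/2)`, by the substitution `y ↦ √(1 - s²) y`. -/
theorem kernel_slice (m : ℕ) {δ : ℝ} (hδ : 0 < δ) (s : ℝ) :
    ∫ y : Fin m → ℝ, (((1 - s ^ 2 - ∑ i, y i ^ 2) ⊔ 0) ^ δ : ℝ)
      = (Ioc (-1 : ℝ) 1).indicator (fun s => (1 - s ^ 2) ^ (δ + (m : ℝ) / 2)) s *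
        ∫ y : Fin m → ℝ, (((1 - ∑ i, y i ^ 2) ⊔ 0) ^ δ : ℝ) := by
  have hsum : ∀ y : Fin m → ℝ, 0 ≤ ∑ i, y i ^ 2 := fun y =>
    Finset.sum_nonneg fun i _ => sq_nonneg _
  by_cases hs : s ^ 2 < 1
  · have hmem : s ∈ Ioc (-1 : ℝ) 1 := by
      obtain ⟨h1, h2⟩ := abs_lt.1 ((sq_lt_one_iff_abs_lt_one s).1 hs)
      exact ⟨h1, h2.le⟩
    rw [indicator_of_mem hmem]
    set ρ := √(1 - s ^ 2) with hρ
    have hpos : 0 < 1 - s ^ 2 := by linarith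
    have hρ0 : 0 < ρ := Real.sqrt_pos.2 hpos
    have hρ2 : ρ ^ 2 = 1 - s ^ 2 := Real.sq_sqrt hpos.le
    have hscale := MeasureTheory.Measure.integral_comp_smul (volume : Measure (Fin m → ℝ))
      (fun y : Fin m → ℝ => (((1 - s ^ 2 - ∑ i, y i ^ 2) ⊔ 0) ^ δ : ℝ)) ρ
    have hpt : ∀ y : Fin m → ℝ, (((1 - s ^ 2 - ∑ i, (ρ • y) i ^ 2) ⊔ 0) ^ δ : ℝ)
        = (1 - s ^ 2) ^ δ * (((1 - ∑ i, y i ^ 2) ⊔ 0) ^ δ : ℝ) := by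
      intro y
      rw [← Real.mul_rpow hpos.le le_sup_right, mul_max_of_nonneg _ _ hpos.le, mul_zero]
      congr 2
      simp only [Pi.smul_apply, smul_eq_mul, mul_pow, ← Finset.mul_sum, hρ2]
      ring
    simp only [hpt] at hscale
    rw [integral_const_mul] at hscale
    simp only [Module.finrank_fintype_fun_eq_card, Fintype.card_fin, smul_eq_mul] at hscale
    have hρm : ρ ^ m = (1 - s ^ 2) ^ ((m : ℝ) / 2) := by
      rw [hρ, Real.sqrt_eq_rpow, ← Real.rpow_natCast, ← Real.rpow_mul hpos.le]
      congr 1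
      ring
    have hρm0 : 0 < ρ ^ m := by positivity
    rw [abs_of_pos (by positivity), inv_mul_eq_div, eq_div_iff hρm0.ne'] at hscale
    rw [← hscale, Real.rpow_add hpos, ← hρm]
    ring
  · have hz : ∀ t : ℝ, 1 ≤ s ^ 2 + t → ((1 - s ^ 2 - t) ⊔ 0) ^ δ = (0 : ℝ) := by
      intro t ht
      rw [max_eq_right (by linarith), Real.zero_rpow hδ.ne']
    have h0 : (Ioc (-1 : ℝ) 1).indicator (fun s => (1 - s ^ 2) ^ (δ + (m : ℝ) / 2)) s = 0 := by
      by_cases hmem : s ∈ Ioc (-1 : ℝ) 1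
      · rw [indicator_of_mem hmem]
        have : s ^ 2 = 1 := le_antisymm (by nlinarith [hmem.1, hmem.2]) (not_lt.1 hs)
        rw [this, sub_self, Real.zero_rpow (by positivity)]
      · exact indicator_of_notMem hmem _
    rw [h0, zero_mul]
    refine integral_eq_zero_of_ae (Filter.Eventually.of_forall fun y => ?_)
    exact hz (∑ i, y i ^ 2) (by linarith [hsum y, not_lt.1 hs])

/-- The kernel in dimension `m + 1` is, up to a constant factor, the one-dimensional Fourier
integral of `(1 - s²)₊^(δ + m/2)` at frequency `|x|`: a reflection takes `x` to a multiple of the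
first basis vector, and Fubini integrates out the remaining coordinates. -/
theorem brKernel_eq (m : ℕ) {δ : ℝ} (hδ : 0 < δ) :
    ∃ c : ℂ, ∀ x : Euc (m + 1), brKernel (m + 1) δ x =
      (∫ s in (-1 : ℝ)..1, Complex.exp ((2 * π * ‖x‖ : ℝ) * s * I) *
        (((1 - s ^ 2) ^ (δ + (m : ℝ) / 2) : ℝ) : ℂ)) * c := by
  refine ⟨((∫ y : Fin m → ℝ, (((1 - ∑ i, y i ^ 2) ⊔ 0) ^ δ : ℝ) : ℝ) : ℂ), fun x => ?_⟩
  set e : Euc (m + 1) := ‖x‖ • EuclideanSpace.single 0 (1 : ℝ) with he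
  have hen : ‖e‖ = ‖x‖ := by simp [he, norm_smul]
  set L := (Submodule.span ℝ {e - x})ᗮ.reflection with hL
  have hLe : L e = x := Submodule.reflection_sub hen
  have hinner : ∀ v, inner ℝ (L v) x = ‖x‖ * v 0 := by
    intro v
    rw [← hLe, L.inner_map_map, hLe, he, inner_smul_right, EuclideanSpace.inner_single_right]
    simp
  have h1 : brKernel (m + 1) δ x = ∫ v : Euc (m + 1),
      Complex.exp ((2 * π * ‖x‖ : ℝ) * (v 0 : ℝ) * I) *
        (((1 - ‖v‖ ^ 2) ⊔ 0) ^ δ : ℝ) := by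
    rw [brKernel, Real.fourierInv_eq',
      ← L.measurePreserving.integral_comp L.toHomeomorph.measurableEmbedding]
    congr 1
    ext v
    rw [hinner, L.norm_map, smul_eq_mul]
    push_cast
    ring_nf
  have h2 : brKernel (m + 1) δ x = ∫ p : ℝ × (Fin m → ℝ),
      Complex.exp ((2 * π * ‖x‖ : ℝ) * (p.1 : ℝ) * I) *
        (((1 - p.1 ^ 2 - ∑ i, p.2 i ^ 2) ⊔ 0) ^ δ : ℝ) := by
    rw [h1, ← (PiLp.volume_preserving_toLp (Fin (m + 1))).integral_comp
      (MeasurableEquiv.toLp 2 (Fin (m + 1) → ℝ)).measurableEmbedding,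
      ← (volume_preserving_piFinSuccAbove (fun _ : Fin (m + 1) => ℝ) 0).integral_comp
        (MeasurableEquiv.measurableEmbedding _)]
    congr 1
    ext v
    simp only [EuclideanSpace.norm_sq_eq, Fin.sum_univ_succ, Real.norm_eq_abs, sq_abs]
    simp [MeasurableEquiv.piFinSuccAbove, sub_sub, Fin.tail]
  have hint : Integrable (fun p : ℝ × (Fin m → ℝ) =>
      Complex.exp ((2 * π * ‖x‖ : ℝ) * (p.1 : ℝ) * I) *
        ((((1 - p.1 ^ 2 - ∑ i, p.2 i ^ 2) ⊔ 0) ^ δ : ℝ) : ℂ)) := by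
    refine Continuous.integrable_of_hasCompactSupport ?_ ?_
    · refine Continuous.mul (by fun_prop) (Complex.continuous_ofReal.comp ?_)
      exact Continuous.rpow_const (by fun_prop) fun _ => Or.inr hδ.le
    · refine HasCompactSupport.intro (isCompact_closedBall (0 : ℝ × (Fin m → ℝ)) 1) ?_
      intro p hp
      have hp' : ¬ (‖p‖ ≤ 1) := by simpa using hp
      have hkey : 1 ≤ p.1 ^ 2 + ∑ i, p.2 i ^ 2 := by
        by_contra hlt
        push Not at hlt
        apply hp'
        have hs : 0 ≤ ∑ i, p.2 i ^ 2 := Finset.sum_nonneg fun i _ => sq_nonneg _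
        refine max_le ?_ ((pi_norm_le_iff_of_nonneg zero_le_one).2 fun i => ?_)
        · exact (sq_le_one_iff_abs_le_one _).1 (by linarith)
        · have := Finset.single_le_sum (f := fun i => p.2 i ^ 2) (fun i _ => sq_nonneg _)
            (Finset.mem_univ i)
          exact (sq_le_one_iff_abs_le_one _).1 (by nlinarith [sq_nonneg p.1])
      rw [max_eq_right (by linarith), Real.zero_rpow hδ.ne']
      simp
  rw [h2, Measure.volume_eq_prod, integral_prod _ hint,
    intervalIntegral.integral_of_le (by norm_num), ← integral_mul_const,
    ← integral_indicator measurableSet_Ioc]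
  congr 1
  ext s
  dsimp only
  rw [integral_const_mul, integral_complex_ofReal, kernel_slice m hδ s]
  by_cases hs : s ∈ Ioc (-1 : ℝ) 1
  · simp only [indicator_of_mem hs]
    push_cast
    ring
  · simp only [indicator_of_notMem hs]
    simp

/-- The Bochner-Riesz kernel is bounded and decays with an exponent `a > n`; for `n ≥ 1` this is
`a = δ + (n + 1) / 2`. In dimension `0` the decay condition is vacuous. -/
theorem brKernel_bound (n : ℕ) {δ : ℝ} (hδ : ((n : ℝ) - 1) / 2 < δ) :
    ∃ A a : ℝ, 0 < A ∧ (n : ℝ) < a ∧ ∀ z : Euc n, ‖brKernel n δ z‖ ≤ A ∧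
      (z ≠ 0 → ‖brKernel n δ z‖ ≤ A * ‖z‖ ^ (-a)) := by
  rcases n with _ | m
  · refine ⟨‖brKernel 0 δ 0‖ + 1, 1, by positivity, by simp, fun z => ?_⟩
    rw [Subsingleton.elim z 0]
    exact ⟨by linarith, fun h => absurd rfl h⟩
  · push_cast at hδ
    have hm : (0 : ℝ) ≤ m := m.cast_nonneg
    have hδ0 : 0 < δ := by linarith
    have hν : 0 < δ + (m : ℝ) / 2 := by positivity
    obtain ⟨c, hc⟩ := brKernel_eq m hδ0
    obtain ⟨A, hA, hdec⟩ := oscillatory_decay hν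
    set a := δ + (m : ℝ) / 2 + 1 with ha
    refine ⟨2 * ‖c‖ + A * (2 * π) ^ (-a) * ‖c‖ + 1, a, by positivity, ?_, fun z => ⟨?_, ?_⟩⟩
    · push_cast
      linarith
    · have h1 : ‖∫ s in (-1 : ℝ)..1, Complex.exp ((2 * π * ‖z‖ : ℝ) * s * I) *
          (((1 - s ^ 2) ^ (δ + (m : ℝ) / 2) : ℝ) : ℂ)‖ ≤ 1 * |1 - (-1 : ℝ)| := by
        refine intervalIntegral.norm_integral_le_of_norm_le_const fun s hs => ?_
        rw [uIoc_of_le (by norm_num)] at hs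
        have h0 : 0 ≤ 1 - s ^ 2 := by nlinarith [hs.1, hs.2]
        rw [norm_mul, ← Complex.ofReal_mul, Complex.norm_exp_ofReal_mul_I, one_mul,
          Complex.norm_real, Real.norm_eq_abs, abs_of_nonneg (Real.rpow_nonneg h0 _)]
        exact Real.rpow_le_one h0 (by nlinarith [sq_nonneg s]) hν.le
      have h2 : (1 : ℝ) * |1 - (-1 : ℝ)| = 2 := by norm_num
      rw [h2] at h1
      rw [hc, norm_mul]
      have h3 : 0 ≤ A * (2 * π) ^ (-a) * ‖c‖ := by positivity
      nlinarith [norm_nonneg c]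
    · intro hz
      have hz0 : 0 < ‖z‖ := norm_pos_iff.2 hz
      have h1 := hdec (2 * π * ‖z‖) (by positivity)
      rw [Real.mul_rpow (by positivity) hz0.le] at h1
      rw [hc, norm_mul]
      calc _ ≤ A * ((2 * π) ^ (-a) * ‖z‖ ^ (-a)) * ‖c‖ := by gcongr
        _ = (A * (2 * π) ^ (-a) * ‖c‖) * ‖z‖ ^ (-a) := by ring
        _ ≤ _ := by
          gcongr
          linarith [norm_nonneg c]

/-! ### Domination by the maximal function -/

theorem volume_cube {n : ℕ} (x : Euc n) (r : ℝ) :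
    volume (cube x r) = ENNReal.ofReal r ^ n := by
  have h : (@WithLp.toLp 2 (Fin n → ℝ)) ⁻¹' (cube x r)
      = Set.pi univ fun i => Icc (x i - r / 2) (x i + r / 2) := by
    ext y
    simp only [cube, mem_preimage, mem_ofPred_eq, mem_pi, mem_univ, true_imp_iff, mem_Icc]
    refine forall_congr' fun i => ?_
    rw [abs_le]
    constructor <;> rintro ⟨h1, h2⟩ <;> constructor <;> linarith
  rw [← (PiLp.volume_preserving_toLp (Fin n)).measure_preimage_emb
    (MeasurableEquiv.toLp 2 (Fin n → ℝ)).measurableEmbedding, h, volume_pi_pi]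
  simp

theorem measurableSet_cube {n : ℕ} (x : Euc n) (r : ℝ) : MeasurableSet (cube x r) := by
  have : cube x r = ⋂ i, {y : Euc n | |y i - x i| ≤ r / 2} := by
    ext y
    simp [cube]
  rw [this]
  refine MeasurableSet.iInter fun i => (isClosed_le ?_ continuous_const).measurableSet
  fun_prop

theorem lintegral_cube_le {n : ℕ} (f : Euc n → ℂ) (x : Euc n) {r : ℝ} (hr : 0 < r) :
    ∫⁻ y in cube x r, ‖f y‖ₑ ≤ ENNReal.ofReal r ^ n * hlMax f x := by
  have h : (volume (cube x r))⁻¹ * ∫⁻ y in cube x r, (‖f y‖₊ : ℝ≥0∞) ≤ hlMax f x := by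
    have hx : x ∈ cube x r := fun i => by
      rw [sub_self, abs_zero]
      positivity
    exact le_iSup_of_le x (le_iSup_of_le r (le_iSup_of_le hr (le_iSup_of_le hx le_rfl)))
  rw [volume_cube] at h
  have h0 : ENNReal.ofReal r ^ n ≠ 0 := pow_ne_zero _ (by simpa using hr)
  have h1 : ENNReal.ofReal r ^ n ≠ ⊤ := ENNReal.pow_ne_top ENNReal.ofReal_ne_top
  exact (ENNReal.inv_mul_le_iff h0 h1).1 h

/-- The bound on `φ` in dyadic form: `k` is the least integer with `|z|_∞ ≤ 2^k`, so that
`|z| > 2^(k - 1)` unless `k = 0`. -/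
theorem dyadic_majorant {n : ℕ} {φ : Euc n → ℂ} {A a : ℝ} (hA : 0 < A) (ha : 0 < a)
    (hφ : ∀ z, ‖φ z‖ ≤ A ∧ (z ≠ 0 → ‖φ z‖ ≤ A * ‖z‖ ^ (-a))) (z : Euc n) :
    ∃ k : ℕ, z ∈ cube (0 : Euc n) (2 ^ (k + 1)) ∧ ‖φ z‖ ≤ A * 2 ^ a * (2 ^ (-a)) ^ k := by
  classical
  have hex : ∃ k : ℕ, ∀ i, |z i| ≤ 2 ^ k := by
    obtain ⟨k, hk⟩ := pow_unbounded_of_one_lt ‖z‖ (one_lt_two (α := ℝ))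
    exact ⟨k, fun i => (PiLp.norm_apply_le z i).trans hk.le⟩
  refine ⟨Nat.find hex, fun i => ?_, ?_⟩
  · have := Nat.find_spec hex i
    simpa [pow_succ] using this
  · rcases hk : Nat.find hex with _ | k
    · rw [pow_zero, mul_one]
      exact (hφ z).1.trans (le_mul_of_one_le_right hA.le
        (Real.one_le_rpow one_le_two ha.le))
    · have hnot := Nat.find_min hex (m := k) (by omega)
      push Not at hnot
      obtain ⟨i, hi⟩ := hnot
      have hzk : (2 : ℝ) ^ k ≤ ‖z‖ := hi.le.trans (PiLp.norm_apply_le z i)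
      have h2k : (0 : ℝ) < 2 ^ k := by positivity
      have hz : z ≠ 0 := norm_pos_iff.1 (h2k.trans_le hzk)
      have hcancel : (2 : ℝ) ^ a * 2 ^ (-a) = 1 := by
        rw [← Real.rpow_add two_pos, add_neg_cancel, Real.rpow_zero]
      calc ‖φ z‖ ≤ A * ‖z‖ ^ (-a) := (hφ z).2 hz
        _ ≤ A * (2 ^ k) ^ (-a) := by
          gcongr 1
          exact Real.rpow_le_rpow_of_nonpos h2k hzk (by linarith)
        _ = A * (2 ^ (-a)) ^ k := by
          rw [← Real.rpow_natCast, ← Real.rpow_mul two_pos.le, ← Real.rpow_natCast,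
            ← Real.rpow_mul two_pos.le, mul_comm (k : ℝ)]
        _ = A * 2 ^ a * (2 ^ (-a)) ^ (k + 1) := by
          rw [pow_succ]
          linear_combination -(A * (2 ^ (-a)) ^ k) * hcancel

/-- Convolutions with the dilates of a function that is bounded and `O(|z|^(-a))`, `a > n`, are
controlled by the maximal function: the dyadic cube of side `2^(k + 1) / R` about `x` contributes
a multiple of `2^(k (n - a)) M f(x)`. -/
theorem convolution_le_hlMax {n : ℕ} {φ : Euc n → ℂ} {A a : ℝ} (hA : 0 < A) (ha : (n : ℝ) < a)
    (hφ : ∀ z, ‖φ z‖ ≤ A ∧ (z ≠ 0 → ‖φ z‖ ≤ A * ‖z‖ ^ (-a))) :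
    ∃ C : ℝ≥0, 0 < C ∧ ∀ f : Euc n → ℂ, LocallyIntegrable f volume → ∀ x : Euc n,
      ∀ R : ℝ, 0 < R → ‖∫ y, dil φ R⁻¹ (x - y) * f y‖ₑ ≤ (C : ℝ≥0∞) * hlMax f x := by
  have ha0 : 0 < a := lt_of_le_of_lt n.cast_nonneg ha
  set b : ℕ → ℝ := fun k => A * 2 ^ a * (2 ^ (-a)) ^ k with hb
  have hb0 : ∀ k, 0 ≤ b k := fun k => by positivity
  set K : ℝ≥0∞ := ∑' k, ENNReal.ofReal (b k * (2 ^ (k + 1)) ^ n) with hK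
  have hKtop : K ≠ ⊤ := by
    have hsum : Summable fun k : ℕ => b k * (2 ^ (k + 1)) ^ n := by
      have heq : (fun k : ℕ => b k * (2 ^ (k + 1)) ^ n)
          = fun k => (A * 2 ^ a * 2 ^ n) * ((2 : ℝ) ^ (-a) * 2 ^ n) ^ k := by
        ext k
        simp only [hb, mul_pow, pow_succ, ← pow_mul, mul_comm n k]
        ring
      rw [heq]
      refine (summable_geometric_of_lt_one (by positivity) ?_).mul_left _
      rw [← Real.rpow_natCast, ← Real.rpow_add two_pos]
      exact Real.rpow_lt_one_of_one_lt_of_neg one_lt_two (by linarith)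
    exact hsum.tsum_ofReal_ne_top
  refine ⟨K.toNNReal + 1, by positivity, fun f hf x R hR => ?_⟩
  set Q : ℕ → Set (Euc n) := fun k => cube x (2 ^ (k + 1) / R) with hQ
  have hpt : ∀ y, ‖dil φ R⁻¹ (x - y) * f y‖ₑ ≤ ∑' k, (Q k).indicator
      (fun y => ENNReal.ofReal (R ^ n * b k) * ‖f y‖ₑ) y := by
    intro y
    obtain ⟨k, hk, hle⟩ := dyadic_majorant hA ha0 hφ (R • (x - y))
    refine le_trans ?_ (ENNReal.le_tsum k)
    have hy : y ∈ Q k := by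
      intro i
      have := hk i
      simp only [PiLp.smul_apply, PiLp.sub_apply, smul_eq_mul, PiLp.zero_apply, sub_zero, abs_mul,
        abs_of_pos hR] at this
      rw [abs_sub_comm, div_right_comm, le_div_iff₀ hR, mul_comm]
      exact this
    rw [indicator_of_mem hy, enorm_mul]
    gcongr
    rw [← ofReal_norm]
    refine ENNReal.ofReal_le_ofReal ?_
    rw [dil, norm_smul, inv_pow, inv_inv, inv_inv, Real.norm_eq_abs, abs_of_pos (by positivity)]
    gcongr
  have hmeas : ∀ k, AEMeasurable ((Q k).indicator
      (fun y => ENNReal.ofReal (R ^ n * b k) * ‖f y‖ₑ)) volume := fun k =>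
    ((hf.aestronglyMeasurable.enorm.const_mul _)).indicator (measurableSet_cube _ _)
  calc ‖∫ y, dil φ R⁻¹ (x - y) * f y‖ₑ
      ≤ ∫⁻ y, ‖dil φ R⁻¹ (x - y) * f y‖ₑ := enorm_integral_le_lintegral_enorm _
    _ ≤ ∫⁻ y, ∑' k, (Q k).indicator (fun y => ENNReal.ofReal (R ^ n * b k) * ‖f y‖ₑ) y :=
        lintegral_mono hpt
    _ = ∑' k, ENNReal.ofReal (R ^ n * b k) * ∫⁻ y in Q k, ‖f y‖ₑ := by
        rw [lintegral_tsum hmeas]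
        congr 1
        ext k
        rw [lintegral_indicator (measurableSet_cube _ _),
          lintegral_const_mul' _ _ ENNReal.ofReal_ne_top]
    _ ≤ ∑' k, ENNReal.ofReal (b k * (2 ^ (k + 1)) ^ n) * hlMax f x := by
        refine ENNReal.tsum_le_tsum fun k => ?_
        have h2 : (0 : ℝ) < 2 ^ (k + 1) / R := by positivity
        calc _ ≤ ENNReal.ofReal (R ^ n * b k) *
              (ENNReal.ofReal (2 ^ (k + 1) / R) ^ n * hlMax f x) := by
              gcongr
              exact lintegral_cube_le f x h2
          _ = _ := by
              have hbk := hb0 k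
              rw [← mul_assoc, ← ENNReal.ofReal_pow h2.le, ← ENNReal.ofReal_mul (by positivity)]
              congr 2
              rw [div_pow]
              field_simp
    _ = K * hlMax f x := ENNReal.tsum_mul_right
    _ ≤ _ := by
        gcongr
        rw [ENNReal.coe_add, ENNReal.coe_toNNReal hKtop]
        exact le_self_add

/-- Let `δ > (n-1)/2`. Then there is a constant `C > 0` such that for
every (locally integrable) function `f` on `ℝⁿ` and every `x`, the maximal Bochner-Riesz
operator satisfies `T^δ_* f(x) ≤ C · M f(x)`, where `M` is the Hardy-Littlewood maximal
operator. -/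
theorem maxBochnerRiesz_le_hlMax (n : ℕ) (δ : ℝ) (hδ : ((n : ℝ) - 1) / 2 < δ) :
    ∃ C : ℝ≥0, 0 < C ∧ ∀ f : Euc n → ℂ, LocallyIntegrable f volume →
      ∀ x : Euc n, maxBR n δ f x ≤ (C : ℝ≥0∞) * hlMax f x := by
  obtain ⟨A, a, hA, ha, hφ⟩ := brKernel_bound n hδ
  obtain ⟨C, hC, h⟩ := convolution_le_hlMax hA ha hφ
  exact ⟨C, hC, fun f hf x => iSup₂_le fun R hR => h f hf x R hR⟩
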